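/- arXiv:1310.7811 — 6 statements merged into one kernel-verified Lean document; each statement's English description precedes it below -/
import Mathlib

section
/- Let a, q, α, β, γ, δ ∈ ℝ with a ∉ {0,1}, and set ε := α + β − γ − δ + 1. Let (c_n)_{n≥0} be a real sequence whose power series ∑_{n=0}^∞ c_n x^n converges on (−r, r) for some r > 0 with (0, r) ∩ {1, a} = ∅, and suppose y(x) := x^{1−γ} ∑_{n=0}^∞ c_n x^n satisfies Heun's differential equation with parameters (a, q, α, β, γ, δ) at every x ∈ (0, r). Then, with the convention c_{−1} := 0, for every n ≥ 0: a(n+1)(n+2−γ) c_{n+1} = [ (n+1−γ)( (1+a)n + aδ + ε ) + q ] c_n − (n−γ+α)(n−γ+β) c_{n−1}. -/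
/-- `y` satisfies Heun's differential equation with parameters `(a, q, α, β, γ, δ)`
(and `ε := α + β - γ - δ + 1`) at the point `x`. -/
def SatisfiesHeun (a q α β γ δ : ℝ) (y : ℝ → ℝ) (x : ℝ) : Prop :=
  deriv (deriv y) x
    + (γ / x + δ / (x - 1) + (α + β - γ - δ + 1) / (x - a)) * deriv y x
    + (α * β * x - q) / (x * (x - 1) * (x - a)) * y x = 0

/- Multiplied by `x² (x - 1) (x - a)`, Heun's equation becomes a polynomial identity in `x` and the
Euler operator `θ = x d/dx`, of degree two in each. Conjugating by `x ^ ρ` replaces `θ` by `θ + ρ`,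
which multiplies the `n`-th Taylor coefficient at `0` by `n + ρ`. The resulting function is analytic
at `0` with zeros accumulating there, so all its Taylor coefficients vanish; these are the
recurrence. -/

open Filter Topology

section Euler

variable {𝕜 : Type*} [NontriviallyNormedField 𝕜]

/-- The operator `θ + ρ`, where `θ = x d/dx` is the Euler operator. -/
noncomputable def eulerOp (ρ : 𝕜) (f : 𝕜 → 𝕜) (x : 𝕜) : 𝕜 :=
  x * deriv f x + ρ * f x

/-- The quadratic polynomial `A * X ^ 2 + B * X + C` evaluated at the operator `X = θ + ρ`. -/
noncomputable def eulerQuadraticOp (ρ A B C : 𝕜) (f : 𝕜 → 𝕜) (x : 𝕜) : 𝕜 :=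
  A * eulerOp ρ (eulerOp ρ f) x + B * eulerOp ρ f x + C * f x

theorem eulerOp_congr {f g : 𝕜 → 𝕜} {x : 𝕜} (ρ : 𝕜) (h : f =ᶠ[𝓝 x] g) :
    eulerOp ρ f x = eulerOp ρ g x := by
  rw [eulerOp, eulerOp, h.deriv_eq, h.eq_of_nhds]

theorem eulerOp_eulerOp {f : 𝕜 → 𝕜} {x : 𝕜} (ρ : 𝕜) (hf : DifferentiableAt 𝕜 f x)
    (hf' : DifferentiableAt 𝕜 (deriv f) x) :
    eulerOp ρ (eulerOp ρ f) x
      = x ^ 2 * deriv (deriv f) x + (2 * ρ + 1) * (x * deriv f x) + ρ ^ 2 * f x := by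
  have hderiv : deriv (eulerOp ρ f) x = deriv f x + x * deriv (deriv f) x + ρ * deriv f x := by
    simpa only [id_eq, one_mul] using!
      (((hasDerivAt_id x).mul hf'.hasDerivAt).add (hf.hasDerivAt.const_mul ρ)).deriv
  rw [eulerOp, hderiv, eulerOp]
  ring

end Euler

theorem eulerOp_rpow_mul {g : ℝ → ℝ} {x : ℝ} (σ ρ : ℝ) (hx : x ≠ 0)
    (hg : DifferentiableAt ℝ g x) :
    eulerOp σ (fun z => z ^ ρ * g z) x = x ^ ρ * eulerOp (σ + ρ) g x := by
  have hderiv : deriv (fun z => z ^ ρ * g z) x = ρ * x ^ (ρ - 1) * g x + x ^ ρ * deriv g x :=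
    ((Real.hasDerivAt_rpow_const (Or.inl hx)).mul hg.hasDerivAt).deriv
  rw [eulerOp, eulerOp, hderiv, Real.rpow_sub_one hx]
  field_simp
  ring

theorem eulerOp_eulerOp_rpow_mul {g : ℝ → ℝ} {x : ℝ} (σ ρ : ℝ) (hx : x ≠ 0)
    (hg : ContDiffAt ℝ 2 g x) :
    eulerOp σ (eulerOp σ (fun z => z ^ ρ * g z)) x
      = x ^ ρ * eulerOp (σ + ρ) (eulerOp (σ + ρ) g) x := by
  have hconj : eulerOp σ (fun z => z ^ ρ * g z) =ᶠ[𝓝 x] fun z => z ^ ρ * eulerOp (σ + ρ) g z := by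
    filter_upwards [eventually_ne_nhds hx, hg.eventually (by simp)] with z hz hgz
    exact eulerOp_rpow_mul σ ρ hz (hgz.differentiableAt two_ne_zero)
  have hdiff : DifferentiableAt ℝ (eulerOp (σ + ρ) g) x :=
    (differentiableAt_id.mul ((hg.derivWithin (m := 1) le_rfl).differentiableAt one_ne_zero)).add
      ((hg.differentiableAt two_ne_zero).const_mul _)
  rw [eulerOp_congr σ hconj, eulerOp_rpow_mul σ ρ hx hdiff]

section Maclaurin

variable {𝕜 : Type*} [NontriviallyNormedField 𝕜] {f g : 𝕜 → 𝕜} {c d : ℕ → 𝕜}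

/-- Near `0`, the function `f` is the sum of the power series with coefficients `c`. The sum is an
explicit series rather than a `HasFPowerSeriesAt`, so that coefficients can be manipulated
directly. -/
def HasMaclaurinSeries (f : 𝕜 → 𝕜) (c : ℕ → 𝕜) : Prop :=
  ∀ᶠ x in 𝓝 0, HasSum (fun n => c n * x ^ n) (f x)

/-- The sequence `0, c 0, c 1, …` of coefficients of `x * ∑ c n * x ^ n`. -/
def shiftRight (c : ℕ → 𝕜) (n : ℕ) : 𝕜 :=
  if n = 0 then 0 else c (n - 1)

@[simp]
theorem shiftRight_zero (c : ℕ → 𝕜) : shiftRight c 0 = 0 := rfl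

@[simp]
theorem shiftRight_succ (c : ℕ → 𝕜) (n : ℕ) : shiftRight c (n + 1) = c n := rfl

theorem hasMaclaurinSeries_iff_hasFPowerSeriesAt :
    HasMaclaurinSeries f c ↔ HasFPowerSeriesAt f (.ofScalars 𝕜 c) 0 := by
  simp only [HasMaclaurinSeries, hasFPowerSeriesAt_iff, FormalMultilinearSeries.coeff_ofScalars,
    smul_eq_mul, zero_add, mul_comm]

namespace HasMaclaurinSeries

theorem add (hf : HasMaclaurinSeries f c) (hg : HasMaclaurinSeries g d) :
    HasMaclaurinSeries (fun x => f x + g x) (fun n => c n + d n) := by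
  filter_upwards [hf, hg] with x hfx hgx
  simpa only [add_mul] using hfx.add hgx

theorem sub (hf : HasMaclaurinSeries f c) (hg : HasMaclaurinSeries g d) :
    HasMaclaurinSeries (fun x => f x - g x) (fun n => c n - d n) := by
  filter_upwards [hf, hg] with x hfx hgx
  simpa only [sub_mul] using hfx.sub hgx

theorem const_mul (hf : HasMaclaurinSeries f c) (b : 𝕜) :
    HasMaclaurinSeries (fun x => b * f x) (fun n => b * c n) := by
  filter_upwards [hf] with x hfx
  simpa only [mul_assoc] using hfx.mul_left b

theorem id_mul (hf : HasMaclaurinSeries f c) :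
    HasMaclaurinSeries (fun x => x * f x) (shiftRight c) := by
  filter_upwards [hf] with x hfx
  rw [← hasSum_nat_add_iff' 1]
  simpa [pow_succ', mul_left_comm] using hfx.mul_left x

theorem eq_zero_of_frequently (hf : HasMaclaurinSeries f c) (h : ∃ᶠ x in 𝓝[≠] 0, f x = 0) :
    c = 0 := by
  have hps := hasMaclaurinSeries_iff_hasFPowerSeriesAt.1 hf
  have hzero := hps.analyticAt.frequently_zero_iff_eventually_zero.1 h
  exact (FormalMultilinearSeries.ofScalars_series_eq_zero 𝕜).1 (hps.eq_zero_of_eventually hzero)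

variable [CompleteSpace 𝕜]

protected theorem deriv (hf : HasMaclaurinSeries f c) :
    HasMaclaurinSeries (deriv f) (fun n => (n + 1) * c (n + 1)) := by
  obtain ⟨r, hr⟩ := hasMaclaurinSeries_iff_hasFPowerSeriesAt.1 hf
  filter_upwards [hasFPowerSeriesAt_iff.1 hr.fderiv.hasFPowerSeriesAt] with x hx
  have hx₁ := hx.mapL (ContinuousLinearMap.apply 𝕜 𝕜 (1 : 𝕜))
  simpa [mul_comm] using hx₁

protected theorem eulerOp (hf : HasMaclaurinSeries f c) (ρ : 𝕜) :
    HasMaclaurinSeries (eulerOp ρ f) (fun n => (n + ρ) * c n) := by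
  convert! hf.deriv.id_mul.add (hf.const_mul ρ) using 1
  ext n
  rcases n with _ | n <;> simp [add_mul]

protected theorem eulerQuadraticOp (hf : HasMaclaurinSeries f c) (ρ A B C : 𝕜) :
    HasMaclaurinSeries (eulerQuadraticOp ρ A B C f)
      (fun n => (A * (n + ρ) ^ 2 + B * (n + ρ) + C) * c n) := by
  convert! ((((hf.eulerOp ρ).eulerOp ρ).const_mul A).add ((hf.eulerOp ρ).const_mul B)).add
    (hf.const_mul C) using 2 with n
  ring

end HasMaclaurinSeries

end Maclaurin

section HeunOperator

variable {𝕜 : Type*} [NontriviallyNormedField 𝕜]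

/-- Heun's operator multiplied by `x² (x - 1) (x - a)`, written in terms of `x` and the Euler
operator `θ`, with `θ` replaced by `θ + ρ`. -/
noncomputable def heunEulerOp (a q α β γ δ ρ : 𝕜) (f : 𝕜 → 𝕜) (x : 𝕜) : 𝕜 :=
  eulerQuadraticOp ρ a (a * (γ - 1)) 0 f x
    - x * eulerQuadraticOp ρ (1 + a) ((1 + a) * (γ - 1) + a * δ + (α + β - γ - δ + 1)) q f x
    + x * (x * eulerQuadraticOp ρ 1 (α + β) (α * β) f x)

variable [CompleteSpace 𝕜] {a q α β γ δ ρ : 𝕜} {g : 𝕜 → 𝕜} {c : ℕ → 𝕜}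

protected theorem HasMaclaurinSeries.heunEulerOp (hg : HasMaclaurinSeries g c) :
    HasMaclaurinSeries (heunEulerOp a q α β γ δ ρ g) (fun n =>
      a * (n + ρ) * (n + ρ + γ - 1) * c n
        - shiftRight (fun m => ((m + ρ) * ((1 + a) * (m + ρ + γ - 1) + a * δ
            + (α + β - γ - δ + 1)) + q) * c m) n
        + shiftRight (shiftRight fun m => (m + ρ + α) * (m + ρ + β) * c m) n) := by
  convert! ((hg.eulerQuadraticOp ρ a (a * (γ - 1)) 0).sub
    (hg.eulerQuadraticOp ρ (1 + a)
      ((1 + a) * (γ - 1) + a * δ + (α + β - γ - δ + 1)) q).id_mul).add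
    (hg.eulerQuadraticOp ρ 1 (α + β) (α * β)).id_mul.id_mul using 1
  ext n
  rcases n with _ | _ | n <;>
  · simp only [shiftRight_zero, shiftRight_succ]
    ring

theorem three_term_recurrence_of_frequently_heunEulerOp_eq_zero (hg : HasMaclaurinSeries g c)
    (hzero : ∃ᶠ x in 𝓝[≠] 0, heunEulerOp a q α β γ δ ρ g x = 0) (n : ℕ) :
    a * (n + 1 + ρ) * (n + ρ + γ) * c (n + 1)
      = ((n + ρ) * ((1 + a) * (n + ρ + γ - 1) + a * δ + (α + β - γ - δ + 1)) + q) * c n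
        - (n - 1 + ρ + α) * (n - 1 + ρ + β) * shiftRight c n := by
  have hcoeff := congrFun (hg.heunEulerOp.eq_zero_of_frequently hzero) (n + 1)
  simp only [shiftRight_succ, Nat.cast_add, Nat.cast_one, Pi.zero_apply] at hcoeff
  have hshift : shiftRight (fun m => (m + ρ + α) * (m + ρ + β) * c m) n
      = (n - 1 + ρ + α) * (n - 1 + ρ + β) * shiftRight c n := by
    rcases n with _ | n <;> simp
  linear_combination hcoeff - hshift

end HeunOperator

section Heun

variable {a q α β γ δ x : ℝ}

theorem heunEulerOp_rpow_mul {g : ℝ → ℝ} (σ ρ : ℝ) (hx : x ≠ 0) (hg : ContDiffAt ℝ 2 g x) :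
    heunEulerOp a q α β γ δ σ (fun z => z ^ ρ * g z) x
      = x ^ ρ * heunEulerOp a q α β γ δ (σ + ρ) g x := by
  simp only [heunEulerOp, eulerQuadraticOp, eulerOp_eulerOp_rpow_mul σ ρ hx hg,
    eulerOp_rpow_mul σ ρ hx (hg.differentiableAt two_ne_zero)]
  ring

theorem satisfiesHeun_iff_heunEulerOp_eq_zero {y : ℝ → ℝ} (hx0 : x ≠ 0) (hx1 : x ≠ 1)
    (hxa : x ≠ a) (hy : ContDiffAt ℝ 2 y x) :
    SatisfiesHeun a q α β γ δ y x ↔ heunEulerOp a q α β γ δ 0 y x = 0 := by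
  have hx1' : x - 1 ≠ 0 := sub_ne_zero.2 hx1
  have hxa' : x - a ≠ 0 := sub_ne_zero.2 hxa
  have hclear : heunEulerOp a q α β γ δ 0 y x = x ^ 2 * (x - 1) * (x - a) *
      (deriv (deriv y) x
        + (γ / x + δ / (x - 1) + (α + β - γ - δ + 1) / (x - a)) * deriv y x
        + (α * β * x - q) / (x * (x - 1) * (x - a)) * y x) := by
    simp only [heunEulerOp, eulerQuadraticOp, eulerOp_eulerOp 0 (hy.differentiableAt two_ne_zero)
      ((hy.derivWithin (m := 1) le_rfl).differentiableAt one_ne_zero)]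
    rw [eulerOp]
    field_simp
    ring
  have hne : x ^ 2 * (x - 1) * (x - a) ≠ 0 :=
    mul_ne_zero (mul_ne_zero (pow_ne_zero 2 hx0) hx1') hxa'
  rw [hclear, mul_eq_zero_iff_left hne, SatisfiesHeun]

theorem satisfiesHeun_rpow_mul_iff {g : ℝ → ℝ} (ρ : ℝ) (hx0 : 0 < x) (hx1 : x ≠ 1)
    (hxa : x ≠ a) (hg : ContDiffAt ℝ 2 g x) :
    SatisfiesHeun a q α β γ δ (fun z => z ^ ρ * g z) x ↔
      heunEulerOp a q α β γ δ ρ g x = 0 := by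
  rw [satisfiesHeun_iff_heunEulerOp_eq_zero hx0.ne' hx1 hxa
      ((Real.contDiffAt_rpow_const_of_ne hx0.ne').mul hg),
    heunEulerOp_rpow_mul 0 ρ hx0.ne' hg, zero_add,
    mul_eq_zero_iff_left (Real.rpow_pos_of_pos hx0 ρ).ne']

end Heun

theorem heun_three_term_recurrence_exponent_one_sub_gamma_general
    {a q α β γ δ ρ : ℝ} {c : ℕ → ℝ} {g : ℝ → ℝ} (hg : HasMaclaurinSeries g c)
    (heq : ∃ᶠ x in 𝓝[>] 0, SatisfiesHeun a q α β γ δ (fun x => x ^ ρ * g x) x) (n : ℕ) :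
    a * (n + 1 + ρ) * (n + ρ + γ) * c (n + 1)
      = ((n + ρ) * ((1 + a) * (n + ρ + γ - 1) + a * δ + (α + β - γ - δ + 1)) + q) * c n
        - (n - 1 + ρ + α) * (n - 1 + ρ + β) * (if n = 0 then 0 else c (n - 1)) := by
  refine three_term_recurrence_of_frequently_heunEulerOp_eq_zero hg ?_ n
  have hle : 𝓝[>] (0 : ℝ) ≤ 𝓝[≠] 0 := nhdsWithin_mono 0 fun _ hx => ne_of_gt hx
  have hne : ∀ b : ℝ, ∀ᶠ x in 𝓝[>] 0, x ≠ b := fun b => by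
    rcases eq_or_ne 0 b with rfl | hb
    · exact hle self_mem_nhdsWithin
    · exact eventually_ne_nhdsWithin hb
  refine Frequently.filter_mono ?_ hle
  have hanalytic : ∀ᶠ x in 𝓝[>] 0, AnalyticAt ℝ g x := nhdsWithin_le_nhds
    (hasMaclaurinSeries_iff_hasFPowerSeriesAt.1 hg).analyticAt.eventually_analyticAt
  have hpos : ∀ᶠ x : ℝ in 𝓝[>] 0, 0 < x := self_mem_nhdsWithin
  refine (heq.and_eventually (hpos.and <| (hne 1).and <| (hne a).and hanalytic)).mono ?_
  rintro x ⟨hxeq, hx0, hx1, hxa, hgx⟩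
  exact (satisfiesHeun_rpow_mul_iff ρ hx0 hx1 hxa hgx.contDiffAt).1 hxeq

theorem heun_three_term_recurrence_exponent_one_sub_gamma
    (a q α β γ δ : ℝ) (ha0 : a ≠ 0) (ha1 : a ≠ 1)
    (c : ℕ → ℝ) (r : ℝ) (hr : 0 < r)
    (hsing : Set.Ioo (0 : ℝ) r ∩ {1, a} = ∅)
    (g : ℝ → ℝ)
    (hg : ∀ x ∈ Set.Ioo (-r) r, HasSum (fun n : ℕ => c n * x ^ n) (g x))
    (heq : ∀ x ∈ Set.Ioo (0 : ℝ) r,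
      SatisfiesHeun a q α β γ δ (fun x => x ^ (1 - γ) * g x) x) :
    ∀ n : ℕ,
      a * ((n : ℝ) + 1) * ((n : ℝ) + 2 - γ) * c (n + 1)
        = (((n : ℝ) + 1 - γ) * ((1 + a) * (n : ℝ) + a * δ + (α + β - γ - δ + 1)) + q) * c n
          - ((n : ℝ) - γ + α) * ((n : ℝ) - γ + β) * (if n = 0 then 0 else c (n - 1)) := by
  intro n
  have hseries : HasMaclaurinSeries g c := by
    filter_upwards [Ioo_mem_nhds (neg_lt_zero.2 hr) hr] using hg
  have hheun : ∀ᶠ x in 𝓝[>] 0, SatisfiesHeun a q α β γ δ (fun x => x ^ (1 - γ) * g x) x :=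
    mem_of_superset (Ioo_mem_nhdsGT hr) heq
  linear_combination
    heun_three_term_recurrence_exponent_one_sub_gamma_general hseries hheun.frequently n
end

section
/- Let a, q, α, β, γ, δ ∈ ℝ with a ∉ {0,1}, and set ε := α + β − γ − δ + 1. Let λ ∈ ℝ and let g be a real function given on (−r, r) (for some r > 0 with (0, r) ∩ {1, a} = ∅) by a convergent power series with g(0) ≠ 0. If y(x) := x^λ g(x) satisfies Heun's differential equation with parameters (a, q, α, β, γ, δ) at every x ∈ (0, r), then λ = 0 or λ = 1 − γ. -/
/-!
Substituting `y = x ^ lam * g` into `y'' + P y' + Q y = 0` and multiplying by `x ^ (2 - lam)` gives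
`lam (lam - 1) g + 2 lam x g' + x² g'' + x P (lam g + x g') + x² Q g = 0` for small `x > 0`.
If `x P → p₀` and `x² Q → q₀`, letting `x → 0⁺` leaves `(lam (lam - 1) + p₀ lam + q₀) g(0) = 0`.
For Heun's equation `p₀ = γ` and `q₀ = 0`, so that `lam (lam - 1 + γ) = 0`.
-/

open Filter Topology

section PowerSeries

variable {𝕜 E : Type*} [NontriviallyNormedField 𝕜] [NormedAddCommGroup E] [NormedSpace 𝕜 E]

theorem analyticAt_of_eventually_hasSum_pow_smul {f : 𝕜 → E} {c : ℕ → E} {z₀ : 𝕜}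
    (h : ∀ᶠ z in 𝓝 0, HasSum (fun n => z ^ n • c n) (f (z₀ + z))) : AnalyticAt 𝕜 f z₀ := by
  let p : FormalMultilinearSeries 𝕜 𝕜 E := fun n => .mkPiRing 𝕜 (Fin n) (c n)
  have hp : HasFPowerSeriesAt f p z₀ := by
    rw [hasFPowerSeriesAt_iff]
    simpa [p, FormalMultilinearSeries.coeff] using h
  exact hp.analyticAt

end PowerSeries

section RpowMul

variable {g : ℝ → ℝ} {x : ℝ}

theorem deriv_rpow_mul (lam : ℝ) (hx : x ≠ 0) (hg : DifferentiableAt ℝ g x) :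
    deriv (fun t => t ^ lam * g t) x = x ^ (lam - 1) * (lam * g x + x * deriv g x) := by
  rw [deriv_fun_mul (Real.differentiableAt_rpow_const_of_ne lam hx) hg,
    Real.deriv_rpow_const, Real.rpow_sub_one hx]
  field_simp

theorem deriv_deriv_rpow_mul (lam : ℝ) (hx : x ≠ 0) (hg : ∀ᶠ t in 𝓝 x, DifferentiableAt ℝ g t)
    (hg' : DifferentiableAt ℝ (deriv g) x) :
    deriv (deriv fun t => t ^ lam * g t) x = x ^ (lam - 2) *
      (lam * (lam - 1) * g x + 2 * lam * x * deriv g x + x ^ 2 * deriv (deriv g) x) := by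
  have hderiv : deriv (fun t => t ^ lam * g t) =ᶠ[𝓝 x]
      fun t => t ^ (lam - 1) * (lam * g t + t * deriv g t) := by
    filter_upwards [hg, eventually_ne_nhds hx] with t ht ht0
    exact deriv_rpow_mul lam ht0 ht
  have hfactor : HasDerivAt (fun t => lam * g t + t * deriv g t)
      (lam * deriv g x + (1 * deriv g x + x * deriv (deriv g) x)) x :=
    (hg.self_of_nhds.hasDerivAt.const_mul lam).add ((hasDerivAt_id x).mul hg'.hasDerivAt)
  rw [hderiv.deriv_eq, deriv_rpow_mul _ hx hfactor.differentiableAt, hfactor.deriv]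
  ring_nf

end RpowMul

section IndicialEquation

variable {g P Q : ℝ → ℝ} {lam p₀ q₀ : ℝ}

theorem reduced_equation_of_rpow_mul {x p q : ℝ} (hx : 0 < x)
    (hg : ∀ᶠ t in 𝓝 x, DifferentiableAt ℝ g t) (hg' : DifferentiableAt ℝ (deriv g) x)
    (heq : deriv (deriv fun t => t ^ lam * g t) x + p * deriv (fun t => t ^ lam * g t) x
      + q * (x ^ lam * g x) = 0) :
    lam * (lam - 1) * g x + 2 * lam * x * deriv g x + x ^ 2 * deriv (deriv g) x
      + x * p * (lam * g x + x * deriv g x) + x ^ 2 * q * g x = 0 := by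
  have hpow : x ^ (lam - 2) ≠ 0 := (Real.rpow_pos_of_pos hx _).ne'
  have hpow₁ : x ^ (lam - 1) = x ^ (lam - 2) * x := by
    rw [← Real.rpow_add_one hx.ne']
    ring_nf
  have hpow₀ : x ^ lam = x ^ (lam - 2) * x ^ 2 := by
    rw [← Real.rpow_add_natCast hx.ne']
    norm_num
  rw [deriv_deriv_rpow_mul lam hx.ne' hg hg', deriv_rpow_mul lam hx.ne' hg.self_of_nhds,
    hpow₁, hpow₀] at heq
  refine (mul_eq_zero.mp ?_).resolve_left hpow
  linear_combination heq

theorem tendsto_reduced_operator (lam : ℝ) (hg : ContDiffAt ℝ 2 g 0)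
    (hP : Tendsto (fun x => x * P x) (𝓝[>] 0) (𝓝 p₀))
    (hQ : Tendsto (fun x => x ^ 2 * Q x) (𝓝[>] 0) (𝓝 q₀)) :
    Tendsto (fun x => lam * (lam - 1) * g x + 2 * lam * x * deriv g x + x ^ 2 * deriv (deriv g) x
        + x * P x * (lam * g x + x * deriv g x) + x ^ 2 * Q x * g x)
      (𝓝[>] 0) (𝓝 ((lam * (lam - 1) + p₀ * lam + q₀) * g 0)) := by
  have hg' : ContDiffAt ℝ 1 (deriv g) 0 := hg.derivWithin (by norm_num)
  have hg'' : ContDiffAt ℝ 0 (deriv (deriv g)) 0 := hg'.derivWithin (by norm_num)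
  have hid : Tendsto (fun x : ℝ => x) (𝓝[>] 0) (𝓝 0) := nhdsWithin_le_nhds
  have hlim₀ : Tendsto g (𝓝[>] 0) (𝓝 (g 0)) := hg.continuousAt.tendsto.mono_left nhdsWithin_le_nhds
  have hlim₁ : Tendsto (deriv g) (𝓝[>] 0) (𝓝 (deriv g 0)) :=
    hg'.continuousAt.tendsto.mono_left nhdsWithin_le_nhds
  have hlim₂ : Tendsto (deriv (deriv g)) (𝓝[>] 0) (𝓝 (deriv (deriv g) 0)) :=
    hg''.continuousAt.tendsto.mono_left nhdsWithin_le_nhds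
  convert ((((hlim₀.const_mul (lam * (lam - 1))).add
    ((hid.const_mul (2 * lam)).mul hlim₁)).add ((hid.pow 2).mul hlim₂)).add
    (hP.mul ((hlim₀.const_mul lam).add (hid.mul hlim₁)))).add (hQ.mul hlim₀) using 2
  ring

theorem indicial_equation_of_rpow_mul (hg : ContDiffAt ℝ 2 g 0) (hg0 : g 0 ≠ 0)
    (hP : Tendsto (fun x => x * P x) (𝓝[>] 0) (𝓝 p₀))
    (hQ : Tendsto (fun x => x ^ 2 * Q x) (𝓝[>] 0) (𝓝 q₀))
    (heq : ∀ᶠ x in 𝓝[>] 0, deriv (deriv fun t => t ^ lam * g t) x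
      + P x * deriv (fun t => t ^ lam * g t) x + Q x * (x ^ lam * g x) = 0) :
    lam * (lam - 1) + p₀ * lam + q₀ = 0 := by
  have hdiff : ∀ᶠ x in 𝓝[>] 0, ContDiffAt ℝ 2 g x :=
    (hg.eventually (by simp)).filter_mono nhdsWithin_le_nhds
  have hreduced : ∀ᶠ x in 𝓝[>] 0,
      lam * (lam - 1) * g x + 2 * lam * x * deriv g x + x ^ 2 * deriv (deriv g) x
        + x * P x * (lam * g x + x * deriv g x) + x ^ 2 * Q x * g x = 0 := by
    filter_upwards [hdiff, self_mem_nhdsWithin, heq] with x hgx hx hxeq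
    exact reduced_equation_of_rpow_mul hx
      ((hgx.eventually (by simp)).mono fun t ht => ht.differentiableAt two_ne_zero)
      ((hgx.derivWithin (m := 1) (by norm_num)).differentiableAt one_ne_zero) hxeq
  have hzero : (lam * (lam - 1) + p₀ * lam + q₀) * g 0 = 0 :=
    tendsto_nhds_unique ((tendsto_reduced_operator lam hg hP hQ).congr' hreduced)
      tendsto_const_nhds
  exact (mul_eq_zero.mp hzero).resolve_right hg0

end IndicialEquation

theorem tendsto_mul_heun_coeff_deriv {a : ℝ} (ha : a ≠ 0) (γ δ ε : ℝ) :
    Tendsto (fun x => x * (γ / x + δ / (x - 1) + ε / (x - a))) (𝓝[≠] 0) (𝓝 γ) := by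
  have hcont : ContinuousAt (fun x => γ + x * (δ / (x - 1) + ε / (x - a))) 0 := by
    fun_prop (disch := simp [ha])
  have hlim : Tendsto (fun x => γ + x * (δ / (x - 1) + ε / (x - a))) (𝓝[≠] 0) (𝓝 γ) := by
    simpa using hcont.tendsto.mono_left nhdsWithin_le_nhds
  refine hlim.congr' ?_
  filter_upwards [self_mem_nhdsWithin] with x (hx : x ≠ 0)
  rw [add_assoc, mul_add x (γ / x), mul_div_cancel₀ γ hx]

theorem tendsto_sq_mul_heun_coeff_self {a : ℝ} (ha : a ≠ 0) (κ q : ℝ) :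
    Tendsto (fun x => x ^ 2 * ((κ * x - q) / (x * (x - 1) * (x - a)))) (𝓝[≠] 0) (𝓝 0) := by
  have hcont : ContinuousAt (fun x => x * ((κ * x - q) / ((x - 1) * (x - a)))) 0 := by
    fun_prop (disch := simp [ha])
  have hlim : Tendsto (fun x => x * ((κ * x - q) / ((x - 1) * (x - a)))) (𝓝[≠] 0) (𝓝 0) := by
    simpa using hcont.tendsto.mono_left nhdsWithin_le_nhds
  refine hlim.congr' ?_
  filter_upwards [self_mem_nhdsWithin] with x (hx : x ≠ 0)
  field_simp

theorem heun_frobenius_exponents_general {a q α β γ δ lam : ℝ} (ha : a ≠ 0) {g : ℝ → ℝ}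
    (hg : ContDiffAt ℝ 2 g 0) (hg0 : g 0 ≠ 0)
    (heq : ∀ᶠ x in 𝓝[>] 0, SatisfiesHeun a q α β γ δ (fun t => t ^ lam * g t) x) :
    lam = 0 ∨ lam = 1 - γ := by
  have hright : 𝓝[>] (0 : ℝ) ≤ 𝓝[≠] 0 := nhdsGT_le_nhdsNE 0
  have hindicial : lam * (lam - 1) + γ * lam + 0 = 0 :=
    indicial_equation_of_rpow_mul hg hg0
      ((tendsto_mul_heun_coeff_deriv ha γ δ _).mono_left hright)
      ((tendsto_sq_mul_heun_coeff_self ha (α * β) q).mono_left hright) heq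
  have hfactor : lam * (lam - (1 - γ)) = 0 := by linear_combination hindicial
  exact (mul_eq_zero.mp hfactor).imp_right sub_eq_zero.mp

theorem heun_frobenius_exponents
    (a q α β γ δ : ℝ) (ha0 : a ≠ 0) (ha1 : a ≠ 1)
    (lam : ℝ) (c : ℕ → ℝ) (g : ℝ → ℝ) (r : ℝ) (hr : 0 < r)
    (hsing : Set.Ioo (0 : ℝ) r ∩ {1, a} = ∅)
    (hg : ∀ x ∈ Set.Ioo (-r) r, HasSum (fun n : ℕ => c n * x ^ n) (g x))
    (hg0 : g 0 ≠ 0)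
    (heq : ∀ x ∈ Set.Ioo (0 : ℝ) r,
      SatisfiesHeun a q α β γ δ (fun x => x ^ lam * g x) x) :
    lam = 0 ∨ lam = 1 - γ := by
  have hanalytic : AnalyticAt ℝ g 0 := analyticAt_of_eventually_hasSum_pow_smul <| by
    filter_upwards [Ioo_mem_nhds (neg_lt_zero.mpr hr) hr] with x hx
    simpa [mul_comm] using hg x hx
  exact heun_frobenius_exponents_general ha0 hanalytic.contDiffAt hg0 <|
    mem_of_superset (Ioo_mem_nhdsGT hr) heq
end

section
/- Let a, q, α, β, γ, δ ∈ ℝ with a ∉ {0,1}, set ε := α + β − γ − δ + 1, and let I be an open interval with I ⊆ (0,1) \ {a}. Suppose v : ℝ → ℝ is twice differentiable on I and satisfies Heun's differential equation with parameters (a, q − (γ+δ−2)a − (γ−1)(α+β−γ−δ+1), α − γ − δ + 2, β − γ − δ + 2, 2 − γ, 2 − δ) at every point of I. Then u(x) := x^{1−γ}(1−x)^{1−δ} · v(x) satisfies Heun's differential equation with parameters (a, q, α, β, γ, δ) at every x ∈ I. -/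
/-!
If `w' = w ℓ`, then substituting `w v` into `y'' + P y' + Q y` gives
`w (v'' + (P + 2 ℓ) v' + (Q + P ℓ + ℓ' + ℓ²) v)`. The weight `w = x ^ (1 - γ) * (1 - x) ^ (1 - δ)`
has `ℓ = (1 - γ) / x + (1 - δ) / (x - 1)`. Since `1 - γ` and `1 - δ` are roots of the indicial
equations `ρ (ρ - 1 + γ) = 0` at `0` and `ρ (ρ - 1 + δ) = 0` at `1`, the double poles in the new
coefficient of `v` cancel, and what is left is again of Heun form.
-/

open scoped Topology

section Gauge

variable {𝕜 : Type*} [NontriviallyNormedField 𝕜] {w ℓ v : 𝕜 → 𝕜} {ℓ' x : 𝕜}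

theorem deriv_mul_of_hasDerivAt_mul_self (hw : HasDerivAt w (w x * ℓ x) x)
    (hv : DifferentiableAt 𝕜 v x) :
    deriv (fun y => w y * v y) x = w x * (ℓ x * v x + deriv v x) := by
  rw [(hw.fun_mul hv.hasDerivAt).deriv]
  ring

theorem deriv_deriv_mul_of_hasDerivAt_mul_self
    (hw : ∀ᶠ y in 𝓝 x, HasDerivAt w (w y * ℓ y) y) (hℓ : HasDerivAt ℓ ℓ' x)
    (hv : ∀ᶠ y in 𝓝 x, DifferentiableAt 𝕜 v y) (hv' : DifferentiableAt 𝕜 (deriv v) x) :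
    deriv (deriv fun y => w y * v y) x =
      w x * (deriv (deriv v) x + 2 * ℓ x * deriv v x + (ℓ' + ℓ x ^ 2) * v x) := by
  have h_deriv : deriv (fun y => w y * v y) =ᶠ[𝓝 x] fun y => w y * (ℓ y * v y + deriv v y) := by
    filter_upwards [hw, hv] with y hwy hvy
    exact deriv_mul_of_hasDerivAt_mul_self hwy hvy
  have h_inner : HasDerivAt (fun y => ℓ y * v y + deriv v y)
      (ℓ' * v x + ℓ x * deriv v x + deriv (deriv v) x) x :=
    (hℓ.fun_mul hv.self_of_nhds.hasDerivAt).fun_add hv'.hasDerivAt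
  rw [h_deriv.deriv_eq, (hw.self_of_nhds.fun_mul h_inner).deriv]
  ring

theorem deriv_deriv_mul_add_deriv_mul_add_mul_of_hasDerivAt_mul_self
    (hw : ∀ᶠ y in 𝓝 x, HasDerivAt w (w y * ℓ y) y) (hℓ : HasDerivAt ℓ ℓ' x)
    (hv : ∀ᶠ y in 𝓝 x, DifferentiableAt 𝕜 v y) (hv' : DifferentiableAt 𝕜 (deriv v) x) (P Q : 𝕜) :
    deriv (deriv fun y => w y * v y) x + P * deriv (fun y => w y * v y) x + Q * (w x * v x) =
      w x * (deriv (deriv v) x + (P + 2 * ℓ x) * deriv v x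
        + (Q + P * ℓ x + ℓ' + ℓ x ^ 2) * v x) := by
  rw [deriv_deriv_mul_of_hasDerivAt_mul_self hw hℓ hv hv',
    deriv_mul_of_hasDerivAt_mul_self hw.self_of_nhds hv.self_of_nhds]
  ring

theorem hasDerivAt_div_add_div_sub_one (p s : 𝕜) (hx0 : x ≠ 0) (hx1 : x ≠ 1) :
    HasDerivAt (fun y => p / y + s / (y - 1)) (-(p / x ^ 2) - s / (x - 1) ^ 2) x := by
  have h0 := (hasDerivAt_const x p).fun_div (hasDerivAt_id' x) hx0
  have h1 := (hasDerivAt_const x s).fun_div ((hasDerivAt_id' x).sub_const 1) (sub_ne_zero.mpr hx1)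
  refine (h0.fun_add h1).congr_deriv ?_
  ring

end Gauge

theorem hasDerivAt_rpow_mul_one_sub_rpow {x : ℝ} (p s : ℝ) (hx0 : x ≠ 0) (hx1 : x ≠ 1) :
    HasDerivAt (fun y : ℝ => y ^ p * (1 - y) ^ s)
      (x ^ p * (1 - x) ^ s * (p / x + s / (x - 1))) x := by
  have h1x : 1 - x ≠ 0 := sub_ne_zero.mpr hx1.symm
  have h0 := Real.hasDerivAt_rpow_const (p := p) (Or.inl hx0)
  have h1 := ((hasDerivAt_id' x).const_sub 1).rpow_const (p := s) (Or.inl h1x)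
  refine (h0.fun_mul h1).congr_deriv ?_
  rw [Real.rpow_sub_one hx0, Real.rpow_sub_one h1x, ← neg_sub 1 x, div_neg]
  ring

section Coefficients

variable {K : Type*} [Field K] (a q α β γ δ x : K)

theorem heun_coeff_deriv_add_two_mul :
    γ / x + δ / (x - 1) + (α + β - γ - δ + 1) / (x - a) + 2 * ((1 - γ) / x + (1 - δ) / (x - 1)) =
      (2 - γ) / x + (2 - δ) / (x - 1)
        + (α - γ - δ + 2 + (β - γ - δ + 2) - (2 - γ) - (2 - δ) + 1) / (x - a) := by
  ring

variable {a x} in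
theorem heun_coeff_self_add_mul_add_sq (hx0 : x ≠ 0) (hx1 : x ≠ 1) (hxa : x ≠ a) :
    (α * β * x - q) / (x * (x - 1) * (x - a))
        + (γ / x + δ / (x - 1) + (α + β - γ - δ + 1) / (x - a)) * ((1 - γ) / x + (1 - δ) / (x - 1))
        + (-((1 - γ) / x ^ 2) - (1 - δ) / (x - 1) ^ 2) + ((1 - γ) / x + (1 - δ) / (x - 1)) ^ 2 =
      ((α - γ - δ + 2) * (β - γ - δ + 2) * x
        - (q - (γ + δ - 2) * a - (γ - 1) * (α + β - γ - δ + 1))) / (x * (x - 1) * (x - a)) := by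
  have hx1' : x - 1 ≠ 0 := sub_ne_zero.mpr hx1
  have hxa' : x - a ≠ 0 := sub_ne_zero.mpr hxa
  field_simp
  ring

end Coefficients

theorem heun_transform_x_pow_one_sub_gamma_one_sub_x_pow_one_sub_delta_general
    (a q α β γ δ : ℝ) {x : ℝ} (hx : x ∈ Set.Ioo (0 : ℝ) 1) (hxa : x ≠ a) {v : ℝ → ℝ}
    (hv : ∀ᶠ y in 𝓝 x, DifferentiableAt ℝ v y) (hv' : DifferentiableAt ℝ (deriv v) x) :
    SatisfiesHeun a q α β γ δ (fun x => x ^ (1 - γ) * (1 - x) ^ (1 - δ) * v x) x ↔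
      SatisfiesHeun a (q - (γ + δ - 2) * a - (γ - 1) * (α + β - γ - δ + 1))
        (α - γ - δ + 2) (β - γ - δ + 2) (2 - γ) (2 - δ) v x := by
  have hx0 : x ≠ 0 := hx.1.ne'
  have hx1 : x ≠ 1 := hx.2.ne
  have hw : ∀ᶠ y in 𝓝 x, HasDerivAt (fun y : ℝ => y ^ (1 - γ) * (1 - y) ^ (1 - δ))
      (y ^ (1 - γ) * (1 - y) ^ (1 - δ) * ((1 - γ) / y + (1 - δ) / (y - 1))) y := by
    filter_upwards [eventually_ne_nhds hx0, eventually_ne_nhds hx1] with y hy0 hy1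
    exact hasDerivAt_rpow_mul_one_sub_rpow _ _ hy0 hy1
  have hw_ne : x ^ (1 - γ) * (1 - x) ^ (1 - δ) ≠ 0 :=
    (mul_pos (Real.rpow_pos_of_pos hx.1 _) (Real.rpow_pos_of_pos (sub_pos.mpr hx.2) _)).ne'
  have hℓ := hasDerivAt_div_add_div_sub_one (1 - γ) (1 - δ) hx0 hx1
  unfold SatisfiesHeun
  rw [deriv_deriv_mul_add_deriv_mul_add_mul_of_hasDerivAt_mul_self hw hℓ hv hv',
    heun_coeff_deriv_add_two_mul, heun_coeff_self_add_mul_add_sq q α β γ δ hx0 hx1 hxa,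
    mul_eq_zero_iff_left hw_ne]

theorem heun_transform_x_pow_one_sub_gamma_one_sub_x_pow_one_sub_delta
    (a q α β γ δ : ℝ) (ha0 : a ≠ 0) (ha1 : a ≠ 1)
    (l u : ℝ) (hsub : Set.Ioo l u ⊆ Set.Ioo (0 : ℝ) 1 \ {a})
    (v : ℝ → ℝ)
    (hv : ∀ x ∈ Set.Ioo l u, DifferentiableAt ℝ v x ∧ DifferentiableAt ℝ (deriv v) x)
    (hveq : ∀ x ∈ Set.Ioo l u,
      SatisfiesHeun a (q - (γ + δ - 2) * a - (γ - 1) * (α + β - γ - δ + 1))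
        (α - γ - δ + 2) (β - γ - δ + 2) (2 - γ) (2 - δ) v x) :
    ∀ x ∈ Set.Ioo l u,
      SatisfiesHeun a q α β γ δ (fun x => x ^ (1 - γ) * (1 - x) ^ (1 - δ) * v x) x := by
  intro x hx
  have hv_near : ∀ᶠ y in 𝓝 x, DifferentiableAt ℝ v y :=
    Filter.eventually_of_mem (isOpen_Ioo.mem_nhds hx) fun y hy => (hv y hy).1
  exact (heun_transform_x_pow_one_sub_gamma_one_sub_x_pow_one_sub_delta_general a q α β γ δ
    (hsub hx).1 (hsub hx).2 hv_near (hv x hx).2).mpr (hveq x hx)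
end

section
/- Let a, q, α, β, γ, δ ∈ ℝ with a ∉ {0,1}, set ε := α + β − γ − δ + 1, and let I be an open interval with I ⊆ (0, ∞) \ {1, a}. Suppose v : ℝ → ℝ is twice differentiable on J := {1/x : x ∈ I} and satisfies Heun's differential equation with parameters (1/a, (q + α[(α−γ−δ+1)a − β + δ])/a, α, α − γ + 1, α − β + 1, δ) at every point of J. Then u(x) := x^{−α} · v(1/x) satisfies Heun's differential equation with parameters (a, q, α, β, γ, δ) at every x ∈ I. -/
open Filter Topology

theorem image_inv_mem_nhds_inv₀ {G : Type*} [GroupWithZero G] [TopologicalSpace G]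
    [ContinuousInv₀ G] {s : Set G} {x : G} (hx : x ≠ 0) (hs : s ∈ 𝓝 x) :
    (·⁻¹) '' s ∈ 𝓝 x⁻¹ := by
  rw [nhds_inv₀ hx]
  exact image_mem_map hs

theorem rpow_sub_ofNat {x : ℝ} (hx : x ≠ 0) (y : ℝ) (n : ℕ) [n.AtLeastTwo] :
    x ^ (y - (ofNat(n) : ℝ)) = x ^ y / x ^ (ofNat(n) : ℕ) :=
  Real.rpow_sub_natCast hx y n

theorem hasDerivAt_rpow_mul_comp_inv {f : ℝ → ℝ} {f' p x : ℝ} (hx : x ≠ 0)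
    (hf : HasDerivAt f f' x⁻¹) :
    HasDerivAt (fun y => y ^ p * f y⁻¹) (p * x ^ (p - 1) * f x⁻¹ - x ^ (p - 2) * f') x := by
  have hpow : HasDerivAt (fun y : ℝ => y ^ p) (p * x ^ (p - 1)) x :=
    Real.hasDerivAt_rpow_const (Or.inl hx)
  have hcomp : HasDerivAt (fun y => f y⁻¹) (f' * -(x ^ 2)⁻¹) x := hf.comp x (hasDerivAt_inv hx)
  refine (hpow.fun_mul hcomp).congr_deriv ?_
  rw [rpow_sub_ofNat hx]
  ring

theorem deriv_rpow_mul_comp_inv {f : ℝ → ℝ} {x : ℝ} (p : ℝ) (hx : x ≠ 0)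
    (hf : DifferentiableAt ℝ f x⁻¹) :
    deriv (fun y => y ^ p * f y⁻¹) x =
      p * (x ^ (p - 1) * f x⁻¹) - x ^ (p - 2) * deriv f x⁻¹ := by
  rw [(hasDerivAt_rpow_mul_comp_inv hx hf.hasDerivAt).deriv, mul_assoc]

theorem deriv_deriv_rpow_mul_comp_inv {f : ℝ → ℝ} {x : ℝ} (p : ℝ) (hx : x ≠ 0)
    (hf : ∀ᶠ t in 𝓝 x⁻¹, DifferentiableAt ℝ f t) (hf' : DifferentiableAt ℝ (deriv f) x⁻¹) :
    deriv (deriv fun y => y ^ p * f y⁻¹) x =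
      p * (p - 1) * x ^ (p - 2) * f x⁻¹ - 2 * (p - 1) * x ^ (p - 3) * deriv f x⁻¹
        + x ^ (p - 4) * deriv (deriv f) x⁻¹ := by
  have hderiv : deriv (fun y => y ^ p * f y⁻¹) =ᶠ[𝓝 x]
      fun y => p * (y ^ (p - 1) * f y⁻¹) - y ^ (p - 2) * deriv f y⁻¹ := by
    filter_upwards [(continuousAt_inv₀ hx).eventually hf, eventually_ne_nhds hx] with y hfy hy
    exact deriv_rpow_mul_comp_inv p hy hfy
  have hleft := (hasDerivAt_rpow_mul_comp_inv (p := p - 1) hx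
    hf.self_of_nhds.hasDerivAt).const_mul p
  have hright := hasDerivAt_rpow_mul_comp_inv (p := p - 2) hx hf'.hasDerivAt
  rw [hderiv.deriv_eq, (hleft.fun_sub hright).deriv]
  ring_nf

/-- The coefficient of `y'` in Heun's equation. -/
noncomputable def heunDerivCoeff (a α β γ δ x : ℝ) : ℝ :=
  γ / x + δ / (x - 1) + (α + β - γ - δ + 1) / (x - a)

/-- The coefficient of `y` in Heun's equation. -/
noncomputable def heunPotential (a q α β x : ℝ) : ℝ :=
  (α * β * x - q) / (x * (x - 1) * (x - a))

/-- The left-hand side of Heun's equation with parameters `(a, q, α, β, γ, δ)`, as a differential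
operator applied to `y` and evaluated at `x`. -/
noncomputable def heunOperator (a q α β γ δ : ℝ) (y : ℝ → ℝ) (x : ℝ) : ℝ :=
  deriv (deriv y) x + heunDerivCoeff a α β γ δ x * deriv y x + heunPotential a q α β x * y x

theorem satisfiesHeun_iff_heunOperator_eq_zero {a q α β γ δ : ℝ} {y : ℝ → ℝ} {x : ℝ} :
    SatisfiesHeun a q α β γ δ y x ↔ heunOperator a q α β γ δ y x = 0 :=
  Iff.rfl

section Inversion

variable {a x : ℝ} (q α β γ δ : ℝ)

theorem heunDerivCoeff_inv (ha : a ≠ 0) (hx0 : x ≠ 0) (hx1 : x ≠ 1) (hxa : x ≠ a) :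
    heunDerivCoeff a⁻¹ α (α - γ + 1) (α - β + 1) δ x⁻¹ =
      2 * (α + 1) * x - x ^ 2 * heunDerivCoeff a α β γ δ x := by
  rw [heunDerivCoeff, heunDerivCoeff]
  field_simp
  ring

theorem heunPotential_inv (ha : a ≠ 0) (hx0 : x ≠ 0) (hx1 : x ≠ 1) (hxa : x ≠ a) :
    heunPotential a⁻¹ ((q + α * ((α - γ - δ + 1) * a - β + δ)) / a) α (α - γ + 1) x⁻¹ =
      α * (α + 1) * x ^ 2 - α * x ^ 3 * heunDerivCoeff a α β γ δ x
        + x ^ 4 * heunPotential a q α β x := by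
  rw [heunPotential, heunPotential, heunDerivCoeff]
  field_simp
  ring

-- For `x < 0` the factor `x ^ (-α)` is `|x| ^ (-α) * cos (π * α)`, which may vanish: hence an
-- identity of operators here, but an equivalence of equations only for `0 < x`.
theorem heunOperator_rpow_neg_mul_comp_inv {v : ℝ → ℝ}
    (ha : a ≠ 0) (hx0 : x ≠ 0) (hx1 : x ≠ 1) (hxa : x ≠ a)
    (hv : ∀ᶠ t in 𝓝 x⁻¹, DifferentiableAt ℝ v t) (hv' : DifferentiableAt ℝ (deriv v) x⁻¹) :
    heunOperator a q α β γ δ (fun y => y ^ (-α) * v y⁻¹) x =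
      x ^ (-α - 4) * heunOperator a⁻¹ ((q + α * ((α - γ - δ + 1) * a - β + δ)) / a)
        α (α - γ + 1) (α - β + 1) δ v x⁻¹ := by
  unfold heunOperator
  rw [deriv_deriv_rpow_mul_comp_inv (-α) hx0 hv hv',
    deriv_rpow_mul_comp_inv (-α) hx0 hv.self_of_nhds,
    heunDerivCoeff_inv α β γ δ ha hx0 hx1 hxa, heunPotential_inv q α β γ δ ha hx0 hx1 hxa]
  simp only [Real.rpow_sub_one hx0, rpow_sub_ofNat hx0]
  field_simp
  ring

theorem heun_transform_x_pow_neg_alpha_comp_inv_general {v : ℝ → ℝ}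
    (ha : a ≠ 0) (hx0 : 0 < x) (hx1 : x ≠ 1) (hxa : x ≠ a)
    (hv : ∀ᶠ t in 𝓝 x⁻¹, DifferentiableAt ℝ v t) (hv' : DifferentiableAt ℝ (deriv v) x⁻¹) :
    SatisfiesHeun a q α β γ δ (fun y => y ^ (-α) * v y⁻¹) x ↔
      SatisfiesHeun a⁻¹ ((q + α * ((α - γ - δ + 1) * a - β + δ)) / a)
        α (α - γ + 1) (α - β + 1) δ v x⁻¹ := by
  simp only [satisfiesHeun_iff_heunOperator_eq_zero]
  rw [heunOperator_rpow_neg_mul_comp_inv q α β γ δ ha hx0.ne' hx1 hxa hv hv',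
    mul_eq_zero_iff_left (Real.rpow_pos_of_pos hx0 _).ne']

end Inversion

theorem heun_transform_x_pow_neg_alpha_comp_inv
    (a q α β γ δ : ℝ) (ha0 : a ≠ 0) (ha1 : a ≠ 1)
    (l u : ℝ) (hsub : Set.Ioo l u ⊆ {x : ℝ | 0 < x ∧ x ≠ 1 ∧ x ≠ a})
    (v : ℝ → ℝ)
    (hv : ∀ t ∈ (fun x : ℝ => 1 / x) '' Set.Ioo l u,
      DifferentiableAt ℝ v t ∧ DifferentiableAt ℝ (deriv v) t)
    (hveq : ∀ t ∈ (fun x : ℝ => 1 / x) '' Set.Ioo l u,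
      SatisfiesHeun (1 / a) ((q + α * ((α - γ - δ + 1) * a - β + δ)) / a)
        α (α - γ + 1) (α - β + 1) δ v t) :
    ∀ x ∈ Set.Ioo l u,
      SatisfiesHeun a q α β γ δ (fun x => x ^ (-α) * v (1 / x)) x := by
  intro x hx
  simp only [one_div] at hv hveq ⊢
  obtain ⟨hx0, hx1, hxa⟩ := hsub hx
  have hv_near : ∀ᶠ t in 𝓝 x⁻¹, DifferentiableAt ℝ v t :=
    eventually_of_mem (image_inv_mem_nhds_inv₀ hx0.ne' (isOpen_Ioo.mem_nhds hx))
      fun t ht => (hv t ht).1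
  exact (heun_transform_x_pow_neg_alpha_comp_inv_general q α β γ δ ha0 hx0 hx1 hxa hv_near
    (hv _ (Set.mem_image_of_mem _ hx)).2).2 (hveq _ (Set.mem_image_of_mem _ hx))
end

section
/- Let a, q, α, β, γ, δ ∈ ℝ with a > 0, a ≠ 1, set ε := α + β − γ − δ + 1, and let I be an open interval with I ⊆ (0, min(1, a)). Suppose v : ℝ → ℝ is twice differentiable on J := {(1−a)x/(x−a) : x ∈ I} and satisfies Heun's differential equation with parameters (1 − a, −q + γβ, −α + γ + δ, β, γ, δ) at every point of J. Then u(x) := (1 − x/a)^{−β} · v((1−a)x/(x−a)) satisfies Heun's differential equation with parameters (a, q, α, β, γ, δ) at every x ∈ I. -/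
/-!
A function `P` with logarithmic derivative `-β / (x - a)`, such as `(1 - x / a) ^ (-β)`, and the
Möbius map `T x = (1 - a) * x / (x - a)` together intertwine the Heun operators
`H`, with parameters `(a, q, α, β, γ, δ)`, and `K`, with the transformed parameters:
`H (P * v ∘ T) = P * (T') ^ 2 * (K v) ∘ T`. The map `T` fixes `0` and sends `1`, `a`, `∞` to
`1`, `∞`, `1 - a`; thus `v ∘ T` has the exponent `β` at `a`, and `P` transfers it to `∞`. Since the
derivatives of `P * v ∘ T` are `P` times combinations of `v ∘ T`, `v' ∘ T` and `v'' ∘ T`, the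
intertwining is an identity between rational functions of `x`.
-/

open Filter Topology

section MulComp

variable {𝕜 : Type*} [NontriviallyNormedField 𝕜] {P T v : 𝕜 → 𝕜} {x : 𝕜}

theorem hasDerivAt_mul_comp {g s : 𝕜} (hP : HasDerivAt P (P x * g) x)
    (hT : HasDerivAt T s x) (hv : DifferentiableAt 𝕜 v (T x)) :
    HasDerivAt (fun y => P y * v (T y)) (P x * (g * v (T x) + s * deriv v (T x))) x :=
  (hP.mul (hv.hasDerivAt.comp x hT)).congr_deriv (by simp only [Function.comp_apply]; ring)

theorem deriv_deriv_mul_comp {g s : 𝕜 → 𝕜} {g' s' : 𝕜}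
    (hP : ∀ᶠ y in 𝓝 x, HasDerivAt P (P y * g y) y) (hg : HasDerivAt g g' x)
    (hT : ∀ᶠ y in 𝓝 x, HasDerivAt T (s y) y) (hs : HasDerivAt s s' x)
    (hv : ∀ᶠ y in 𝓝 x, DifferentiableAt 𝕜 v (T y))
    (hv' : DifferentiableAt 𝕜 (deriv v) (T x)) :
    deriv (deriv fun y => P y * v (T y)) x =
      P x * ((g x ^ 2 + g') * v (T x) + (2 * g x * s x + s') * deriv v (T x)
        + s x ^ 2 * deriv (deriv v) (T x)) := by
  have hderiv : deriv (fun y => P y * v (T y)) =ᶠ[𝓝 x]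
      fun y => P y * (g y * v (T y) + s y * deriv v (T y)) := by
    filter_upwards [hP, hT, hv] with y hPy hTy hvy using (hasDerivAt_mul_comp hPy hTy hvy).deriv
  have hvT : HasDerivAt (fun y => v (T y)) (deriv v (T x) * s x) x :=
    hv.self_of_nhds.hasDerivAt.comp x hT.self_of_nhds
  have hv'T : HasDerivAt (fun y => deriv v (T y)) (deriv (deriv v) (T x) * s x) x :=
    hv'.hasDerivAt.comp x hT.self_of_nhds
  rw [hderiv.deriv_eq,
    (hP.self_of_nhds.fun_mul ((hg.fun_mul hvT).fun_add (hs.fun_mul hv'T))).deriv]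
  ring

end MulComp

section RationalDerivatives

variable {𝕜 : Type*} [NontriviallyNormedField 𝕜] {a x : 𝕜}

theorem hasDerivAt_const_mul_div_sub_const (c : 𝕜) (hx : x ≠ a) :
    HasDerivAt (fun y => c * y / (y - a)) (-(c * a) / (x - a) ^ 2) x :=
  (((hasDerivAt_id' x).const_mul c).fun_div ((hasDerivAt_id' x).sub_const a)
    (sub_ne_zero.2 hx)).congr_deriv (by ring)

theorem hasDerivAt_const_div_sub_const_pow (b : 𝕜) (n : ℕ) (hx : x ≠ a) :
    HasDerivAt (fun y => b / (y - a) ^ n) (-n * b / (x - a) ^ (n + 1)) x := by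
  have hxa : x - a ≠ 0 := sub_ne_zero.2 hx
  refine ((hasDerivAt_const x b).fun_div (((hasDerivAt_id' x).sub_const a).fun_pow n)
    (pow_ne_zero n hxa)).congr_deriv ?_
  cases n with
  | zero => simp
  | succ n =>
    rw [Nat.add_sub_cancel]
    field_simp
    ring

end RationalDerivatives

theorem hasDerivAt_one_sub_div_rpow {a x : ℝ} (p : ℝ) (ha : a ≠ 0) (hx : x ≠ a) :
    HasDerivAt (fun y : ℝ => (1 - y / a) ^ p) ((1 - x / a) ^ p * (p / (x - a))) x := by
  have hxa : x - a ≠ 0 := sub_ne_zero.2 hx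
  have hbase : 1 - x / a = -(x - a) / a := by
    field_simp
    ring
  have hbase_ne : 1 - x / a ≠ 0 := hbase ▸ div_ne_zero (neg_ne_zero.2 hxa) ha
  refine ((((hasDerivAt_id' x).div_const a).const_sub 1).rpow_const
    (Or.inl hbase_ne)).congr_deriv ?_
  rw [Real.rpow_sub_one hbase_ne, mul_div_assoc', mul_div_assoc', div_eq_div_iff hbase_ne hxa,
    hbase]
  ring

/-- The left-hand side of Heun's equation at `x`, with `y₀`, `y₁`, `y₂` in place of the values of
the unknown function and of its first two derivatives. It isolates the algebra of the equation,
over any field, from the calculus. -/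
def heunExpr {𝕜 : Type*} [Field 𝕜] (a q α β γ δ x y₀ y₁ y₂ : 𝕜) : 𝕜 :=
  y₂ + (γ / x + δ / (x - 1) + (α + β - γ - δ + 1) / (x - a)) * y₁
    + (α * β * x - q) / (x * (x - 1) * (x - a)) * y₀

theorem satisfiesHeun_iff_heunExpr_eq_zero {a q α β γ δ x : ℝ} {y : ℝ → ℝ} :
    SatisfiesHeun a q α β γ δ y x ↔
      heunExpr a q α β γ δ x (y x) (deriv y x) (deriv (deriv y) x) = 0 :=
  Iff.rfl

section HeunExpr

variable {𝕜 : Type*} [Field 𝕜]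

theorem heunExpr_const_mul (a q α β γ δ x c y₀ y₁ y₂ : 𝕜) :
    heunExpr a q α β γ δ x (c * y₀) (c * y₁) (c * y₂) =
      c * heunExpr a q α β γ δ x y₀ y₁ y₂ := by
  unfold heunExpr
  ring

theorem heunExpr_mobius {a x : 𝕜} (q α β γ δ y₀ y₁ y₂ : 𝕜) (ha0 : a ≠ 0) (ha1 : a ≠ 1)
    (hx0 : x ≠ 0) (hx1 : x ≠ 1) (hxa : x ≠ a) :
    heunExpr a q α β γ δ x y₀
        (-β / (x - a) * y₀ + -((1 - a) * a) / (x - a) ^ 2 * y₁)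
        (((-β / (x - a)) ^ 2 + β / (x - a) ^ 2) * y₀
          + (2 * (-β / (x - a)) * (-((1 - a) * a) / (x - a) ^ 2)
            + 2 * ((1 - a) * a) / (x - a) ^ 3) * y₁
          + (-((1 - a) * a) / (x - a) ^ 2) ^ 2 * y₂) =
      (-((1 - a) * a) / (x - a) ^ 2) ^ 2 *
        heunExpr (1 - a) (-q + γ * β) (-α + γ + δ) β γ δ ((1 - a) * x / (x - a)) y₀ y₁ y₂ := by
  have hxa' : x - a ≠ 0 := sub_ne_zero.2 hxa
  have hx1' : x - 1 ≠ 0 := sub_ne_zero.2 hx1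
  have ha1' : 1 - a ≠ 0 := sub_ne_zero.2 ha1.symm
  have hT_sub_one : (1 - a) * x / (x - a) - 1 = -(a * (x - 1)) / (x - a) := by
    field_simp
    ring
  have hT_sub_pole : (1 - a) * x / (x - a) - (1 - a) = (1 - a) * a / (x - a) := by
    field_simp
    ring
  unfold heunExpr
  rw [hT_sub_one, hT_sub_pole]
  field_simp
  ring

end HeunExpr

theorem heun_transform_mobius_x_over_x_sub_a_general {a q α β γ δ x : ℝ} {P v : ℝ → ℝ}
    (ha0 : a ≠ 0) (ha1 : a ≠ 1) (hx0 : x ≠ 0) (hx1 : x ≠ 1) (hxa : x ≠ a)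
    (hP : ∀ᶠ y in 𝓝 x, HasDerivAt P (P y * (-β / (y - a))) y)
    (hv : ∀ᶠ y in 𝓝 x, DifferentiableAt ℝ v ((1 - a) * y / (y - a)))
    (hv' : DifferentiableAt ℝ (deriv v) ((1 - a) * x / (x - a)))
    (hveq : SatisfiesHeun (1 - a) (-q + γ * β) (-α + γ + δ) β γ δ v ((1 - a) * x / (x - a))) :
    SatisfiesHeun a q α β γ δ (fun y => P y * v ((1 - a) * y / (y - a))) x := by
  have hT : ∀ᶠ y in 𝓝 x, HasDerivAt (fun y => (1 - a) * y / (y - a))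
      (-((1 - a) * a) / (y - a) ^ 2) y :=
    (eventually_ne_nhds hxa).mono fun y hy => hasDerivAt_const_mul_div_sub_const (1 - a) hy
  have hg : HasDerivAt (fun y => -β / (y - a)) (β / (x - a) ^ 2) x := by
    simpa using hasDerivAt_const_div_sub_const_pow (-β) 1 hxa
  have hs : HasDerivAt (fun y => -((1 - a) * a) / (y - a) ^ 2)
      (2 * ((1 - a) * a) / (x - a) ^ 3) x := by
    simpa using hasDerivAt_const_div_sub_const_pow (-((1 - a) * a)) 2 hxa
  have hderiv := (hasDerivAt_mul_comp hP.self_of_nhds hT.self_of_nhds hv.self_of_nhds).deriv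
  have hderiv₂ := deriv_deriv_mul_comp hP hg hT hs hv hv'
  rw [satisfiesHeun_iff_heunExpr_eq_zero] at hveq ⊢
  rw [hderiv, hderiv₂, heunExpr_const_mul, heunExpr_mobius _ _ _ _ _ _ _ _ ha0 ha1 hx0 hx1 hxa,
    hveq, mul_zero, mul_zero]

theorem heun_transform_mobius_x_over_x_sub_a
    (a q α β γ δ : ℝ) (ha0 : 0 < a) (ha1 : a ≠ 1)
    (l u : ℝ) (hsub : Set.Ioo l u ⊆ Set.Ioo (0 : ℝ) (min 1 a))
    (v : ℝ → ℝ)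
    (hv : ∀ t ∈ (fun x : ℝ => (1 - a) * x / (x - a)) '' Set.Ioo l u,
      DifferentiableAt ℝ v t ∧ DifferentiableAt ℝ (deriv v) t)
    (hveq : ∀ t ∈ (fun x : ℝ => (1 - a) * x / (x - a)) '' Set.Ioo l u,
      SatisfiesHeun (1 - a) (-q + γ * β) (-α + γ + δ) β γ δ v t) :
    ∀ x ∈ Set.Ioo l u,
      SatisfiesHeun a q α β γ δ
        (fun x => (1 - x / a) ^ (-β) * v ((1 - a) * x / (x - a))) x := by
  intro x hx
  obtain ⟨hx0, hx_lt⟩ := hsub hx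
  have hlt : ∀ y ∈ Set.Ioo l u, y < a := fun y hy => (lt_min_iff.1 (hsub hy).2).2
  have hnear : ∀ᶠ y in 𝓝 x, y ∈ Set.Ioo l u := isOpen_Ioo.mem_nhds hx
  exact heun_transform_mobius_x_over_x_sub_a_general ha0.ne' ha1 hx0.ne'
    (lt_min_iff.1 hx_lt).1.ne (hlt x hx).ne
    (hnear.mono fun y hy => hasDerivAt_one_sub_div_rpow (-β) ha0.ne' (hlt y hy).ne)
    (hnear.mono fun y hy => (hv _ ⟨y, hy, rfl⟩).1) (hv _ ⟨x, hx, rfl⟩).2 (hveq _ ⟨x, hx, rfl⟩)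
end

section
/- Let γ > 0, Ω ∈ ℝ, η ∈ (0,1), and s ∈ (0,1). Set R := √(s² − 2(1−2η)s + 1); then R > 0, 1 − s + R > 0, and 1 + s + R > 0, and the series below converges absolutely with ∑_{n=0}^∞ ((γ)_n / n!) · [ ∑_{i=0}^n ((−n)_i (n+Ω)_i / ((γ)_i · i!)) η^i ] · s^n = 2^{Ω−1} · (1 − s + R)^{1−γ} (1 + s + R)^{γ−Ω} / R. -/
/-- The Pochhammer symbol (rising factorial) `(x)ₙ = x (x+1) ⋯ (x+n-1)`. -/
def poch (x : ℝ) (n : ℕ) : ℝ := ∏ k ∈ Finset.range n, (x + k)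

/-!
The sums in the theorem are Jacobi polynomials `P_n^{(α, β)}(x)` with `α = γ - 1`, `β = Ω - γ` and
`x = 1 - 2η`, and the right-hand side is Jacobi's generating function
`F_{α, β}(z) = 2 ^ (α + β) (1 - z + R) ^ (-α) (1 + z + R) ^ (-β) / R`, where `R² = 1 - 2xz + z²`.
For `-1 ≤ x ≤ 1` the polynomial `1 - 2xz + z²` maps the open unit disc into the slit plane. The
principal root `R` therefore has positive real part, as do `1 ± z + R`, so `F_{α, β}` is
holomorphic on the disc and equals its Taylor series there. Logarithmic differentiation gives
`(1 - z) F_{α, β}' = (1 + α) F_{α, β} + (x - 1)/2 (2z F_{α+1, β}' + (α + β + 2) F_{α+1, β})`,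
which is the contiguous relation
`(n + 1) P_{n+1}^{(α, β)} = (n + 1 + α) P_n^{(α, β)} + (2n + α + β + 2) (x - 1)/2 P_n^{(α+1, β)}`
on Taylor coefficients. Hence the two sequences agree, by induction on `n` for all `α` at once.
-/

open Complex Finset Polynomial
open scoped Nat

section AscPochhammer

variable {S : Type*} [CommSemiring S]

theorem eval_ascPochhammer_succ_left (n : ℕ) (x : S) :
    (ascPochhammer S (n + 1)).eval x = x * (ascPochhammer S n).eval (x + 1) := by
  simp [ascPochhammer_succ_left, eval_comp]

theorem eval_ascPochhammer_add (m n : ℕ) (x : S) :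
    (ascPochhammer S (m + n)).eval x =
      (ascPochhammer S m).eval x * (ascPochhammer S n).eval (x + m) := by
  simp [← ascPochhammer_mul, eval_comp]

theorem map_eval_ascPochhammer {T : Type*} [CommSemiring T] (f : S →+* T) (n : ℕ) (x : S) :
    f ((ascPochhammer S n).eval x) = (ascPochhammer T n).eval (f x) := by
  rw [← eval_map_apply, ascPochhammer_map]

theorem eval_ascPochhammer_neg_natCast {R : Type*} [Ring R] (n k : ℕ) :
    (ascPochhammer R k).eval (-(n : R)) = (-1) ^ k * (k ! * n.choose k) := by
  rw [ascPochhammer_eval_neg_eq_descPochhammer, descPochhammer_eval_eq_descFactorial,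
    Nat.descFactorial_eq_factorial_mul_choose, Nat.cast_mul]

end AscPochhammer

theorem poch_eq_eval_ascPochhammer (x : ℝ) (n : ℕ) : poch x n = (ascPochhammer ℝ n).eval x := by
  induction n with
  | zero => simp [poch]
  | succ n ih => rw [ascPochhammer_succ_eval, ← ih, poch, prod_range_succ, poch]

section JacobiPolynomial

variable {A K : Type*} [CommRing A] [Field K]

/-- `n!` times the coefficient of `((x - 1) / 2) ^ i` in the Jacobi polynomial `P_n^{(α, β)}`. -/
noncomputable def jacobiCoeff (α β : A) (n i : ℕ) : A :=
  n.choose i * (ascPochhammer A i).eval (n + α + β + 1) *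
    (ascPochhammer A (n - i)).eval (α + i + 1)

theorem jacobiCoeff_succ_zero (α β : A) (n : ℕ) :
    jacobiCoeff α β (n + 1) 0 = (n + 1 + α) * jacobiCoeff α β n 0 := by
  simp only [jacobiCoeff, Nat.choose_zero_right, ascPochhammer_zero, Nat.sub_zero,
    ascPochhammer_succ_eval, eval_one, Nat.cast_zero, Nat.cast_one]
  ring

theorem jacobiCoeff_self_succ (α β : A) (n : ℕ) : jacobiCoeff α β n (n + 1) = 0 := by
  simp [jacobiCoeff]

theorem jacobiCoeff_succ_succ (α β : A) {n i : ℕ} (hi : i ≤ n) :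
    jacobiCoeff α β (n + 1) (i + 1) =
      (n + 1 + α) * jacobiCoeff α β n (i + 1)
        + (2 * n + α + β + 2) * jacobiCoeff (α + 1) β n i := by
  set u : A := (ascPochhammer A i).eval (n + α + β + 2) with hu
  set v : A := (ascPochhammer A (n - i)).eval (α + i + 2) with hv
  have pascal : ((n + 1).choose (i + 1) : A) = n.choose i + n.choose (i + 1) := by
    rw [Nat.choose_succ_succ, Nat.cast_add]
  have absorption : (n.choose (i + 1) : A) * (i + 1) = n.choose i * (n - i) := by
    have := congrArg (Nat.cast : ℕ → A) (Nat.choose_succ_right_eq n i)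
    rwa [Nat.cast_mul, Nat.cast_mul, Nat.cast_add_one, Nat.cast_sub hi] at this
  have upper : jacobiCoeff α β (n + 1) (i + 1) =
      (n + 1).choose (i + 1) * (u * (n + α + β + 2 + i)) * v := by
    rw [jacobiCoeff, ascPochhammer_succ_eval, Nat.add_sub_add_right, hu, hv]
    push_cast
    ring_nf
  have shifted : jacobiCoeff (α + 1) β n i = n.choose i * u * v := by
    rw [jacobiCoeff, hu, hv]
    ring_nf
  have lower : (n + 1 + α) * jacobiCoeff α β n (i + 1) =
      n.choose (i + 1) * ((n + α + β + 1) * u) * v := by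
    rcases hi.eq_or_lt with rfl | hlt
    · simp [jacobiCoeff]
    · obtain ⟨j, rfl⟩ := Nat.exists_eq_add_of_lt hlt
      rw [jacobiCoeff, eval_ascPochhammer_succ_left, hu, hv, show i + j + 1 - i = j + 1 by omega,
        show i + j + 1 - (i + 1) = j by omega, ascPochhammer_succ_eval]
      push_cast
      ring_nf
  rw [upper, lower, shifted, pascal]
  linear_combination u * v * absorption

/-- The value at `x` of the Jacobi polynomial `P_n^{(α, β)}`. Expanding in powers of `(x - 1) / 2`
with the quotient `(α + 1)ₙ / (α + 1)ᵢ` cancelled to `(α + i + 1)ₙ₋ᵢ` makes the definition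
meaningful for all `α`. -/
noncomputable def jacobiPoly (α β : K) (n : ℕ) (x : K) : K :=
  (∑ i ∈ range (n + 1), jacobiCoeff α β n i * ((x - 1) / 2) ^ i) / n !

theorem jacobiPoly_zero (α β x : K) : jacobiPoly α β 0 x = 1 := by
  simp [jacobiPoly, jacobiCoeff]

theorem succ_mul_jacobiPoly_succ [CharZero K] (α β : K) (n : ℕ) (x : K) :
    (n + 1) * jacobiPoly α β (n + 1) x =
      (n + 1 + α) * jacobiPoly α β n x
        + (2 * n + α + β + 2) * ((x - 1) / 2) * jacobiPoly (α + 1) β n x := by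
  set t := (x - 1) / 2 with ht
  have lower : ∑ i ∈ range (n + 1), jacobiCoeff α β n i * t ^ i =
      ∑ i ∈ range (n + 1), jacobiCoeff α β n (i + 1) * t ^ (i + 1) + jacobiCoeff α β n 0 := by
    have := sum_range_succ' (fun i ↦ jacobiCoeff α β n i * t ^ i) (n + 1)
    rwa [sum_range_succ, jacobiCoeff_self_succ, zero_mul, add_zero, pow_zero, mul_one] at this
  have upper : ∑ i ∈ range (n + 2), jacobiCoeff α β (n + 1) i * t ^ i =
      (n + 1 + α) * ∑ i ∈ range (n + 1), jacobiCoeff α β n i * t ^ i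
        + (2 * n + α + β + 2) * t * ∑ i ∈ range (n + 1), jacobiCoeff (α + 1) β n i * t ^ i := by
    have term (i : ℕ) (hi : i ∈ range (n + 1)) :
        jacobiCoeff α β (n + 1) (i + 1) * t ^ (i + 1) =
          (n + 1 + α) * (jacobiCoeff α β n (i + 1) * t ^ (i + 1))
            + (2 * n + α + β + 2) * t * (jacobiCoeff (α + 1) β n i * t ^ i) := by
      rw [jacobiCoeff_succ_succ α β (Nat.lt_succ_iff.mp (mem_range.mp hi))]
      ring
    rw [lower, sum_range_succ', jacobiCoeff_succ_zero, sum_congr rfl term, sum_add_distrib,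
      ← mul_sum, ← mul_sum]
    ring
  have hn : (n + 1 : K) ≠ 0 := n.cast_add_one_ne_zero
  have hn' : (n ! : K) ≠ 0 := by exact_mod_cast n.factorial_ne_zero
  simp only [jacobiPoly, ← ht, upper, Nat.factorial_succ]
  push_cast
  field_simp

theorem map_jacobiPoly {L : Type*} [Field L] (f : K →+* L) (α β : K) (n : ℕ) (x : K) :
    f (jacobiPoly α β n x) = jacobiPoly (f α) (f β) n (f x) := by
  simp [jacobiPoly, jacobiCoeff, map_eval_ascPochhammer, map_ofNat]

theorem jacobiPoly_eq_hypergeometric_sum {γ Ω η : ℝ} (hγ : ∀ k : ℕ, γ + k ≠ 0) (n : ℕ) :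
    poch γ n / n ! * ∑ i ∈ range (n + 1),
        poch (-(n : ℝ)) i * poch (n + Ω) i / (poch γ i * i !) * η ^ i =
      jacobiPoly (γ - 1) (Ω - γ) n (1 - 2 * η) := by
  rw [jacobiPoly, mul_sum, sum_div]
  refine sum_congr rfl fun i hi ↦ ?_
  have hγi : (ascPochhammer ℝ i).eval γ ≠ 0 := fun h ↦ by
    obtain ⟨k, -, hk⟩ := (ascPochhammer_eval_eq_zero_iff i γ).mp h
    exact hγ k (by rw [hk, add_neg_cancel])
  have hi' : (i ! : ℝ) ≠ 0 := by positivity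
  have hsplit : (ascPochhammer ℝ n).eval γ =
      (ascPochhammer ℝ i).eval γ * (ascPochhammer ℝ (n - i)).eval (γ + i) := by
    rw [← eval_ascPochhammer_add, Nat.add_sub_cancel' (Nat.lt_succ_iff.mp (mem_range.mp hi))]
  simp only [poch_eq_eval_ascPochhammer, eval_ascPochhammer_neg_natCast, hsplit, jacobiCoeff]
  rw [show (1 - 2 * η - 1) / 2 = -1 * η by ring, mul_pow,
    show n + (γ - 1) + (Ω - γ) + 1 = n + Ω by ring, show γ - 1 + i + 1 = γ + i by ring]
  field_simp

end JacobiPolynomial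

theorem iteratedDeriv_id_mul_deriv_zero {𝕜 : Type*} [NontriviallyNormedField 𝕜] {f : 𝕜 → 𝕜}
    {n : ℕ} (hf : ContDiffAt 𝕜 n (deriv f) 0) :
    iteratedDeriv n (fun z ↦ z * deriv f z) 0 = n * iteratedDeriv n f 0 := by
  rw [iteratedDeriv_fun_mul contDiffAt_fun_id hf]
  cases n with
  | zero => simp
  | succ n => simp [iteratedDeriv_fun_id_zero, iteratedDeriv_succ']

theorem hasDerivAt_cpow_const_of_mem_slitPlane {f : ℂ → ℂ} {f' z c : ℂ} (hf : HasDerivAt f f' z)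
    (hz : f z ∈ slitPlane) : HasDerivAt (fun w ↦ f w ^ c) (f z ^ c * (c * f' / f z)) z := by
  have hne := slitPlane_ne_zero hz
  refine (hf.cpow_const hz).congr_deriv ?_
  rw [cpow_sub _ _ hne, cpow_one]
  field_simp

theorem re_sqrt_pos_of_mem_slitPlane {w : ℂ} (hw : w ∈ slitPlane) : 0 < w.sqrt.re := by
  rw [Complex.sqrt, cpow_inv_two_re, Real.sqrt_pos]
  rcases mem_slitPlane_iff.mp hw with hre | him
  · positivity
  · linarith [neg_abs_le w.re, abs_re_lt_norm.mpr him]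

section JacobiRoot

theorem one_sub_two_mul_add_sq_pos {x r : ℝ} (hx : |x| ≤ 1) (hr : |r| < 1) :
    0 < 1 - 2 * x * r + r ^ 2 := by
  have hxr : x * r ≤ |r| := calc
    x * r ≤ |x| * |r| := (le_abs_self _).trans_eq (abs_mul x r)
    _ ≤ |r| := mul_le_of_le_one_left (abs_nonneg r) hx
  calc
    0 < (1 - |r|) ^ 2 := pow_pos (sub_pos.mpr hr) 2
    _ = 1 - 2 * |r| + r ^ 2 := by rw [sub_sq, sq_abs]; ring
    _ ≤ 1 - 2 * x * r + r ^ 2 := by linarith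

variable {x : ℝ} {z : ℂ}

theorem one_sub_two_mul_add_sq_mem_slitPlane (hx : |x| ≤ 1) (hz : ‖z‖ < 1) :
    1 - 2 * x * z + z ^ 2 ∈ slitPlane := by
  have hre : (1 - 2 * x * z + z ^ 2).re = 1 - 2 * x * z.re + z.re ^ 2 - z.im ^ 2 := by
    simp only [sq, add_re, sub_re, one_re, mul_re, re_ofNat, im_ofNat, ofReal_re, ofReal_im, mul_im]
    ring
  have him : (1 - 2 * x * z + z ^ 2).im = 2 * z.im * (z.re - x) := by
    simp only [sq, add_im, sub_im, one_im, mul_re, re_ofNat, im_ofNat, ofReal_re, ofReal_im, mul_im]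
    ring
  rw [mem_slitPlane_iff, or_iff_not_imp_right, not_not, hre, him]
  intro h
  rcases mul_eq_zero.mp h with hreal | hvert
  · have hz_im : z.im = 0 := by linarith
    simpa [hz_im] using one_sub_two_mul_add_sq_pos hx ((abs_re_le_norm z).trans_lt hz)
  · have hz_re : z.re = x := by linarith
    have hz_sq : z.re ^ 2 + z.im ^ 2 < 1 := by
      rw [← sq_lt_one_iff₀ (norm_nonneg z), Complex.sq_norm, normSq_apply] at hz
      linarith
    rw [← hz_re]
    linarith

/-- The principal branch `R` of `√(1 - 2xz + z²)`, holomorphic in the unit disc when `|x| ≤ 1`. -/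
noncomputable def jacobiRoot (x : ℝ) (z : ℂ) : ℂ := (1 - 2 * x * z + z ^ 2).sqrt

theorem jacobiRoot_zero (x : ℝ) : jacobiRoot x 0 = 1 := by simp [jacobiRoot]

theorem jacobiRoot_sq (x : ℝ) (z : ℂ) : jacobiRoot x z ^ 2 = 1 - 2 * x * z + z ^ 2 :=
  cpow_ofNat_inv_pow _ 2

theorem jacobiRoot_ofReal {s : ℝ} (hx : |x| ≤ 1) (hs : |s| < 1) :
    jacobiRoot x s = √(1 - 2 * x * s + s ^ 2) := by
  have hpos := one_sub_two_mul_add_sq_pos hx hs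
  have hcast : 1 - 2 * (x : ℂ) * s + s ^ 2 = ((1 - 2 * x * s + s ^ 2 : ℝ) : ℂ) := by push_cast; rfl
  rw [jacobiRoot, hcast, Complex.sqrt_of_nonneg (by exact_mod_cast hpos.le), ofReal_re]

theorem re_jacobiRoot_pos (hx : |x| ≤ 1) (hz : ‖z‖ < 1) : 0 < (jacobiRoot x z).re :=
  re_sqrt_pos_of_mem_slitPlane (one_sub_two_mul_add_sq_mem_slitPlane hx hz)

theorem jacobiRoot_ne_zero (hx : |x| ≤ 1) (hz : ‖z‖ < 1) : jacobiRoot x z ≠ 0 :=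
  slitPlane_ne_zero (.inl (re_jacobiRoot_pos hx hz))

theorem re_one_sub_add_jacobiRoot_pos (hx : |x| ≤ 1) (hz : ‖z‖ < 1) :
    0 < (1 - z + jacobiRoot x z).re := by
  rw [add_re, sub_re, one_re]
  linarith [re_jacobiRoot_pos hx hz, re_le_norm z]

theorem re_one_add_add_jacobiRoot_pos (hx : |x| ≤ 1) (hz : ‖z‖ < 1) :
    0 < (1 + z + jacobiRoot x z).re := by
  rw [add_re, add_re, one_re]
  linarith [re_jacobiRoot_pos hx hz, neg_le_of_abs_le (abs_re_le_norm z)]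

theorem hasDerivAt_jacobiRoot (hx : |x| ≤ 1) (hz : ‖z‖ < 1) :
    HasDerivAt (jacobiRoot x) ((z - x) / jacobiRoot x z) z := by
  have hmem := one_sub_two_mul_add_sq_mem_slitPlane hx hz
  have hw := slitPlane_ne_zero hmem
  have hR := jacobiRoot_ne_zero hx hz
  have hpoly : HasDerivAt (fun w : ℂ ↦ 1 - 2 * x * w + w ^ 2) (2 * (z - x)) z := by
    refine (((hasDerivAt_id' z).const_mul (2 * x : ℂ)).const_sub 1).fun_add
      (hasDerivAt_pow 2 z) |>.congr_deriv ?_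
    push_cast
    ring
  refine (hpoly.cpow_const hmem).congr_deriv ?_
  rw [cpow_sub _ _ hw, cpow_one, ← Complex.sqrt, ← jacobiRoot, ← jacobiRoot_sq]
  field_simp

end JacobiRoot

section GeneratingFunction

variable {x : ℝ} {z : ℂ}

theorem one_sub_add_jacobiRoot_ne_zero (hx : |x| ≤ 1) (hz : ‖z‖ < 1) :
    1 - z + jacobiRoot x z ≠ 0 :=
  slitPlane_ne_zero (.inl (re_one_sub_add_jacobiRoot_pos hx hz))

theorem one_add_add_jacobiRoot_ne_zero (hx : |x| ≤ 1) (hz : ‖z‖ < 1) :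
    1 + z + jacobiRoot x z ≠ 0 :=
  slitPlane_ne_zero (.inl (re_one_add_add_jacobiRoot_pos hx hz))

theorem hasDerivAt_one_sub_add_jacobiRoot (hx : |x| ≤ 1) (hz : ‖z‖ < 1) :
    HasDerivAt (fun w ↦ 1 - w + jacobiRoot x w)
      ((1 - x - (1 - z + jacobiRoot x z)) / jacobiRoot x z) z := by
  have hR := jacobiRoot_ne_zero hx hz
  refine ((hasDerivAt_id' z).const_sub 1).fun_add (hasDerivAt_jacobiRoot hx hz)
    |>.congr_deriv ?_
  field_simp
  ring

theorem hasDerivAt_one_add_add_jacobiRoot (hx : |x| ≤ 1) (hz : ‖z‖ < 1) :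
    HasDerivAt (fun w ↦ 1 + w + jacobiRoot x w)
      ((1 - x) * (1 + z + jacobiRoot x z) / (jacobiRoot x z * (1 - z + jacobiRoot x z))) z := by
  have hR := jacobiRoot_ne_zero hx hz
  have hA := one_sub_add_jacobiRoot_ne_zero hx hz
  refine ((hasDerivAt_id' z).const_add 1).fun_add (hasDerivAt_jacobiRoot hx hz)
    |>.congr_deriv ?_
  field_simp
  linear_combination jacobiRoot_sq x z

/-- Jacobi's generating function `2 ^ (α + β) (1 - z + R) ^ (-α) (1 + z + R) ^ (-β) / R` of the
polynomials `P_n^{(α, β)}(x)`. All powers are principal; for `|x| ≤ 1` and `|z| < 1` the bases have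
positive real part. -/
noncomputable def jacobiGen (α β : ℂ) (x : ℝ) (z : ℂ) : ℂ :=
  2 ^ (α + β) * (1 - z + jacobiRoot x z) ^ (-α) * (1 + z + jacobiRoot x z) ^ (-β) / jacobiRoot x z

theorem jacobiGen_zero (α β : ℂ) (x : ℝ) : jacobiGen α β x 0 = 1 := by
  rw [jacobiGen, jacobiRoot_zero, sub_zero, add_zero, one_add_one_eq_two, div_one,
    ← cpow_add _ _ two_ne_zero, ← cpow_add _ _ two_ne_zero, add_neg_cancel_comm, add_neg_cancel,
    cpow_zero]

theorem jacobiGen_add_one (α β : ℂ) (hx : |x| ≤ 1) (hz : ‖z‖ < 1) :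
    jacobiGen (α + 1) β x z = 2 * jacobiGen α β x z / (1 - z + jacobiRoot x z) := by
  rw [jacobiGen, neg_add', cpow_sub _ _ (one_sub_add_jacobiRoot_ne_zero hx hz), add_right_comm,
    cpow_add _ _ two_ne_zero, cpow_one, cpow_one, jacobiGen]
  ring

theorem hasDerivAt_jacobiGen (α β : ℂ) (hx : |x| ≤ 1) (hz : ‖z‖ < 1) :
    HasDerivAt (jacobiGen α β x)
      (jacobiGen α β x z *
        ((α * (1 - z + jacobiRoot x z) + (α + β) * (x - 1)) /
            (jacobiRoot x z * (1 - z + jacobiRoot x z)) +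
          (x - z) / jacobiRoot x z ^ 2)) z := by
  have hR := jacobiRoot_ne_zero hx hz
  have hA := one_sub_add_jacobiRoot_ne_zero hx hz
  have hB := one_add_add_jacobiRoot_ne_zero hx hz
  have dA := hasDerivAt_cpow_const_of_mem_slitPlane (c := -α)
    (hasDerivAt_one_sub_add_jacobiRoot hx hz) (.inl (re_one_sub_add_jacobiRoot_pos hx hz))
  have dB := hasDerivAt_cpow_const_of_mem_slitPlane (c := -β)
    (hasDerivAt_one_add_add_jacobiRoot hx hz) (.inl (re_one_add_add_jacobiRoot_pos hx hz))
  refine ((dA.const_mul (2 ^ (α + β))).fun_mul dB).fun_div (hasDerivAt_jacobiRoot hx hz) hR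
    |>.congr_deriv ?_
  rw [jacobiGen]
  field_simp
  ring

theorem deriv_jacobiGen (α β : ℂ) (hx : |x| ≤ 1) (hz : ‖z‖ < 1) :
    deriv (jacobiGen α β x) z =
      z * deriv (jacobiGen α β x) z + (1 + α) * jacobiGen α β x z +
        (x - 1) / 2 * (2 * (z * deriv (jacobiGen (α + 1) β x) z) +
          (α + β + 2) * jacobiGen (α + 1) β x z) := by
  have hR := jacobiRoot_ne_zero hx hz
  have hA := one_sub_add_jacobiRoot_ne_zero hx hz
  have hsq := jacobiRoot_sq x z
  rw [(hasDerivAt_jacobiGen α β hx hz).deriv, (hasDerivAt_jacobiGen (α + 1) β hx hz).deriv,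
    jacobiGen_add_one α β hx hz]
  set F := jacobiGen α β x z
  set r := jacobiRoot x z
  field_simp
  linear_combination (-F * (r * (α + 1) * (1 - z + r + (x - 1)) + r * (x - 1) * β +
    (x - z) * (1 - z + r))) * hsq

theorem differentiableOn_jacobiGen (α β : ℂ) (hx : |x| ≤ 1) :
    DifferentiableOn ℂ (jacobiGen α β x) (Metric.ball 0 1) := fun _ hz ↦
  (hasDerivAt_jacobiGen α β hx (mem_ball_zero_iff.mp hz)).differentiableAt.differentiableWithinAt

theorem iteratedDeriv_succ_jacobiGen_zero (α β : ℂ) (hx : |x| ≤ 1) (n : ℕ) :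
    iteratedDeriv (n + 1) (jacobiGen α β x) 0 =
      (n + 1 + α) * iteratedDeriv n (jacobiGen α β x) 0 +
        (2 * n + α + β + 2) * ((x - 1) / 2) * iteratedDeriv n (jacobiGen (α + 1) β x) 0 := by
  have hball : Metric.ball (0 : ℂ) 1 ∈ nhds 0 := Metric.ball_mem_nhds 0 one_pos
  have analytic (α : ℂ) : AnalyticAt ℂ (jacobiGen α β x) 0 :=
    (differentiableOn_jacobiGen α β hx).analyticAt hball
  have smooth (α : ℂ) : ContDiffAt ℂ n (jacobiGen α β x) 0 := (analytic α).contDiffAt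
  have smooth_deriv (α : ℂ) : ContDiffAt ℂ n (deriv (jacobiGen α β x)) 0 :=
    (analytic α).deriv.contDiffAt
  have contiguous : deriv (jacobiGen α β x) =ᶠ[nhds 0] fun z ↦
      z * deriv (jacobiGen α β x) z + (1 + α) * jacobiGen α β x z +
        (x - 1) / 2 * (2 * (z * deriv (jacobiGen (α + 1) β x) z) +
          (α + β + 2) * jacobiGen (α + 1) β x z) := by
    filter_upwards [hball] with z hz using deriv_jacobiGen α β hx (mem_ball_zero_iff.mp hz)
  rw [iteratedDeriv_succ', contiguous.iteratedDeriv_eq,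
    iteratedDeriv_fun_add (by fun_prop) (by fun_prop),
    iteratedDeriv_fun_add (by fun_prop) (by fun_prop), iteratedDeriv_const_mul_field,
    iteratedDeriv_const_mul_field, iteratedDeriv_fun_add (by fun_prop) (by fun_prop),
    iteratedDeriv_const_mul_field, iteratedDeriv_const_mul_field,
    iteratedDeriv_id_mul_deriv_zero (smooth_deriv α),
    iteratedDeriv_id_mul_deriv_zero (smooth_deriv (α + 1))]
  ring

theorem iteratedDeriv_jacobiGen_zero (α β : ℂ) (hx : |x| ≤ 1) (n : ℕ) :
    iteratedDeriv n (jacobiGen α β x) 0 = n ! * jacobiPoly α β n x := by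
  induction n generalizing α with
  | zero => rw [iteratedDeriv_zero, jacobiGen_zero, jacobiPoly_zero, Nat.factorial_zero,
      Nat.cast_one, one_mul]
  | succ n ih =>
    rw [iteratedDeriv_succ_jacobiGen_zero α β hx, ih, ih, Nat.factorial_succ]
    push_cast
    linear_combination -(n ! : ℂ) * succ_mul_jacobiPoly_succ α β n (x : ℂ)

theorem hasSum_jacobiPoly_mul_pow (α β : ℂ) (hx : |x| ≤ 1) (hz : ‖z‖ < 1) :
    HasSum (fun n ↦ jacobiPoly α β n (x : ℂ) * z ^ n) (jacobiGen α β x z) := by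
  refine (hasSum_taylorSeries_on_ball (differentiableOn_jacobiGen α β hx)
    (mem_ball_zero_iff.mpr hz)).congr_fun fun n ↦ ?_
  have hn : (n ! : ℂ) ≠ 0 := by exact_mod_cast n.factorial_ne_zero
  rw [iteratedDeriv_jacobiGen_zero α β hx, sub_zero, smul_eq_mul, smul_eq_mul]
  field_simp

theorem jacobiGen_ofReal (α β : ℝ) {s : ℝ} (hx : |x| ≤ 1) (hs : |s| < 1) :
    jacobiGen α β x s = ((2 ^ (α + β) * (1 - s + √(1 - 2 * x * s + s ^ 2)) ^ (-α) *
      (1 + s + √(1 - 2 * x * s + s ^ 2)) ^ (-β) / √(1 - 2 * x * s + s ^ 2) : ℝ) : ℂ) := by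
  have hs' := abs_lt.mp hs
  have hR := Real.sqrt_nonneg (1 - 2 * x * s + s ^ 2)
  have hA : 0 ≤ 1 - s + √(1 - 2 * x * s + s ^ 2) := by linarith
  have hB : 0 ≤ 1 + s + √(1 - 2 * x * s + s ^ 2) := by linarith
  rw [jacobiGen, jacobiRoot_ofReal hx hs]
  push_cast [ofReal_cpow hA, ofReal_cpow hB, ofReal_cpow zero_le_two]
  rfl

theorem hasSum_jacobiPoly_mul_pow_ofReal (α β : ℝ) {s : ℝ} (hx : |x| ≤ 1) (hs : |s| < 1) :
    HasSum (fun n ↦ jacobiPoly α β n x * s ^ n)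
      (2 ^ (α + β) * (1 - s + √(1 - 2 * x * s + s ^ 2)) ^ (-α) *
        (1 + s + √(1 - 2 * x * s + s ^ 2)) ^ (-β) / √(1 - 2 * x * s + s ^ 2)) := by
  rw [← Complex.hasSum_ofReal, ← jacobiGen_ofReal α β hx hs]
  have hs' : ‖(s : ℂ)‖ < 1 := by rwa [norm_real]
  have hsum := hasSum_jacobiPoly_mul_pow α β hx hs'
  simpa only [← ofRealHom_eq_coe, map_mul, map_pow, map_jacobiPoly] using hsum

end GeneratingFunction

theorem jacobi_type_generating_function_general {γ Ω η s R : ℝ} (hγ : ∀ k : ℕ, γ + k ≠ 0)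
    (hη : η ∈ Set.Icc (0 : ℝ) 1) (hs : |s| < 1)
    (hR : R = √(s ^ 2 - 2 * (1 - 2 * η) * s + 1)) :
    0 < R ∧ 0 < 1 - s + R ∧ 0 < 1 + s + R ∧
    Summable (fun n : ℕ =>
      |poch γ n / n.factorial *
        (∑ i ∈ Finset.range (n + 1),
          poch (-(n : ℝ)) i * poch ((n : ℝ) + Ω) i / (poch γ i * i.factorial) * η ^ i)
        * s ^ n|) ∧
    HasSum (fun n : ℕ =>
      poch γ n / n.factorial *
        (∑ i ∈ Finset.range (n + 1),
          poch (-(n : ℝ)) i * poch ((n : ℝ) + Ω) i / (poch γ i * i.factorial) * η ^ i)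
        * s ^ n)
      ((2 : ℝ) ^ (Ω - 1) * (1 - s + R) ^ (1 - γ) * (1 + s + R) ^ (γ - Ω) / R) := by
  have hx : |1 - 2 * η| ≤ 1 := abs_le.mpr ⟨by linarith [hη.2], by linarith [hη.1]⟩
  replace hR : R = √(1 - 2 * (1 - 2 * η) * s + s ^ 2) := by rw [hR]; ring_nf
  have hR_pos : 0 < R := hR ▸ Real.sqrt_pos.mpr (one_sub_two_mul_add_sq_pos hx hs)
  have hA : 0 < 1 - s + R := by linarith [(abs_lt.mp hs).2]
  have hB : 0 < 1 + s + R := by linarith [(abs_lt.mp hs).1]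
  have hsum := hasSum_jacobiPoly_mul_pow_ofReal (γ - 1) (Ω - γ) hx hs
  simp only [← jacobiPoly_eq_hypergeometric_sum hγ, ← hR, neg_sub, sub_add_sub_cancel'] at hsum
  exact ⟨hR_pos, hA, hB, hsum.summable.abs, hsum⟩

theorem jacobi_type_generating_function
    (γ Ω η s : ℝ) (hγ : 0 < γ)
    (hη : η ∈ Set.Ioo (0 : ℝ) 1) (hs : s ∈ Set.Ioo (0 : ℝ) 1)
    (R : ℝ) (hR : R = Real.sqrt (s ^ 2 - 2 * (1 - 2 * η) * s + 1)) :
    0 < R ∧ 0 < 1 - s + R ∧ 0 < 1 + s + R ∧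
    Summable (fun n : ℕ =>
      |poch γ n / n.factorial *
        (∑ i ∈ Finset.range (n + 1),
          poch (-(n : ℝ)) i * poch ((n : ℝ) + Ω) i / (poch γ i * i.factorial) * η ^ i)
        * s ^ n|) ∧
    HasSum (fun n : ℕ =>
      poch γ n / n.factorial *
        (∑ i ∈ Finset.range (n + 1),
          poch (-(n : ℝ)) i * poch ((n : ℝ) + Ω) i / (poch γ i * i.factorial) * η ^ i)
        * s ^ n)
      ((2 : ℝ) ^ (Ω - 1) * (1 - s + R) ^ (1 - γ) * (1 + s + R) ^ (γ - Ω) / R) :=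
  jacobi_type_generating_function_general (fun k ↦ by positivity)
    (Set.Ioo_subset_Icc_self hη) (abs_lt.mpr ⟨by linarith [hs.1], hs.2⟩) hR
end
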